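/- Let n ≥ 1, s ∈ (0,1), and let f be a Schwartz function on ℝ^{n+1} = ℝⁿ_x × ℝ_t. For every fixed (x,t) ∈ ℝ^{n+1}, the function τ ↦ τ^{−1−s} (P^H_τ f(x,t) − f(x,t)) is (absolutely) integrable on (0,∞), where P^H_τ f(x,t) = ∫_{ℝⁿ} G(x−z, τ) f(z, t−τ) dz and G(x,τ) = (4πτ)^{−n/2} e^{−|x|²/(4τ)}. -/

import Mathlib

/-!
The integrand is controlled by two bounds on `P_τ f(x,t) - f(x,t)`, for `τ > 0`.

* Near `τ = 0` the difference is `O(τ)`. Since the Gauss kernel is even in space and has mass one,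
  `2 (P_τ f - f)(x,t) = ∫ G(z,τ) (f(x-z,t-τ) + f(x+z,t-τ) - 2 f(x,t)) dz`.
  The symmetric second difference in space is at most `C ‖z‖²` because the derivative of a Schwartz
  function is Lipschitz, and the time increment is at most `L τ` because `f` is Lipschitz. The second
  moment of `G(·,τ)` is `O(τ)`, which follows from the pointwise inequality
  `‖z‖² G(z,τ) ≤ 8 · 2^{n/2} τ G(z,2τ)` (`sq_norm_mul_gaussKernel_le`).
* The difference is bounded uniformly in `τ`, again because `G(·,τ)` has mass one.

As `0 < s < 1`, the weight `τ^{-1-s}` times `τ` is integrable on `(0,1]`, and `τ^{-1-s}` itself is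
integrable on `(1,∞)`.
-/

open MeasureTheory

/-- The Gauss–Weierstrass kernel `G(x,τ) = (4πτ)^{-n/2} e^{-|x|²/(4τ)}`. -/
noncomputable def gaussKernel {n : ℕ} (x : EuclideanSpace ℝ (Fin n)) (τ : ℝ) : ℝ :=
  (4 * Real.pi * τ) ^ (-(n : ℝ) / 2) * Real.exp (-‖x‖ ^ 2 / (4 * τ))

/-- The evolutive semigroup `P^H_τ f(x,t) = ∫_{ℝⁿ} G(x-z,τ) f(z,t-τ) dz`. -/
noncomputable def evolutiveSemigroup {n : ℕ}
    (f : SchwartzMap (EuclideanSpace ℝ (Fin n) × ℝ) ℝ)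
    (x : EuclideanSpace ℝ (Fin n)) (t τ : ℝ) : ℝ :=
  ∫ z : EuclideanSpace ℝ (Fin n), gaussKernel (x - z) τ * f (z, t - τ)

lemma gaussKernel_nonneg {n : ℕ} (z : EuclideanSpace ℝ (Fin n)) {τ : ℝ} (hτ : 0 < τ) :
    0 ≤ gaussKernel z τ := by
  unfold gaussKernel; positivity

lemma gaussKernel_neg {n : ℕ} (z : EuclideanSpace ℝ (Fin n)) (τ : ℝ) :
    gaussKernel (-z) τ = gaussKernel z τ := by
  simp [gaussKernel]

lemma measurable_gaussKernel {n : ℕ} :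
    Measurable fun p : EuclideanSpace ℝ (Fin n) × ℝ => gaussKernel p.1 p.2 := by
  unfold gaussKernel
  fun_prop

lemma integral_gaussKernel {n : ℕ} {τ : ℝ} (hτ : 0 < τ) :
    ∫ z : EuclideanSpace ℝ (Fin n), gaussKernel z τ = 1 := by
  have h := GaussianFourier.integral_rexp_neg_mul_sq_norm (V := EuclideanSpace ℝ (Fin n))
    (b := (4 * τ)⁻¹) (by positivity)
  have e : ∀ z : EuclideanSpace ℝ (Fin n),
      Real.exp (-‖z‖ ^ 2 / (4 * τ)) = Real.exp (-(4 * τ)⁻¹ * ‖z‖ ^ 2) := by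
    intro z; congr 1; field_simp
  simp only [gaussKernel, e]
  rw [integral_const_mul, h, finrank_euclideanSpace_fin, div_inv_eq_mul,
    show Real.pi * (4 * τ) = 4 * Real.pi * τ by ring, ← Real.rpow_add (by positivity)]
  rw [show -(n : ℝ) / 2 + (n : ℝ) / 2 = 0 by ring, Real.rpow_zero]

lemma integrable_gaussKernel {n : ℕ} {τ : ℝ} (hτ : 0 < τ) :
    Integrable fun z : EuclideanSpace ℝ (Fin n) => gaussKernel z τ :=
  -- the Bochner integral of a non-integrable function is `0`, not `1`
  Integrable.of_integral_ne_zero (by rw [integral_gaussKernel hτ]; exact one_ne_zero)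

/-- Doubling the time absorbs the factor `‖z‖²`; this gives the second moment bound without
computing the moment. -/
lemma sq_norm_mul_gaussKernel_le {n : ℕ} (z : EuclideanSpace ℝ (Fin n)) {τ : ℝ} (hτ : 0 < τ) :
    ‖z‖ ^ 2 * gaussKernel z τ ≤ 8 * 2 ^ ((n : ℝ) / 2) * τ * gaussKernel z (2 * τ) := by
  unfold gaussKernel
  have h1 : (4 * Real.pi * (2 * τ)) ^ (-(n : ℝ) / 2)
      = 2 ^ (-(n : ℝ) / 2) * (4 * Real.pi * τ) ^ (-(n : ℝ) / 2) := by
    rw [← Real.mul_rpow (by norm_num) (by positivity)]; congr 1; ring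
  have h2 : (2 : ℝ) ^ ((n : ℝ) / 2) * 2 ^ (-(n : ℝ) / 2) = 1 := by
    rw [← Real.rpow_add (by norm_num)]
    rw [show (n : ℝ) / 2 + -(n : ℝ) / 2 = 0 by ring, Real.rpow_zero]
  -- `y e^{-y} ≤ 2 e^{-y/2}` at `y = ‖z‖² / (4τ)`
  have h3 : ‖z‖ ^ 2 * Real.exp (-‖z‖ ^ 2 / (4 * τ))
      ≤ 8 * τ * Real.exp (-‖z‖ ^ 2 / (4 * (2 * τ))) := by
    have e : Real.exp (-‖z‖ ^ 2 / (4 * (2 * τ)))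
        = Real.exp (‖z‖ ^ 2 / (8 * τ)) * Real.exp (-‖z‖ ^ 2 / (4 * τ)) := by
      rw [← Real.exp_add]; congr 1; field_simp; ring
    rw [e, ← mul_assoc]
    gcongr
    have := Real.add_one_le_exp (‖z‖ ^ 2 / (8 * τ))
    calc ‖z‖ ^ 2 = 8 * τ * (‖z‖ ^ 2 / (8 * τ)) := by field_simp
      _ ≤ _ := by gcongr; linarith
  have hA : 0 ≤ (4 * Real.pi * τ) ^ (-(n : ℝ) / 2) := by positivity
  rw [h1]
  calc _ = (4 * Real.pi * τ) ^ (-(n : ℝ) / 2) * (‖z‖ ^ 2 * Real.exp (-‖z‖ ^ 2 / (4 * τ))) := by ring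
    _ ≤ (4 * Real.pi * τ) ^ (-(n : ℝ) / 2) * (8 * τ * Real.exp (-‖z‖ ^ 2 / (4 * (2 * τ)))) := by
        gcongr
    _ = (2 ^ ((n : ℝ) / 2) * 2 ^ (-(n : ℝ) / 2)) * ((4 * Real.pi * τ) ^ (-(n : ℝ) / 2)
        * (8 * τ * Real.exp (-‖z‖ ^ 2 / (4 * (2 * τ))))) := by rw [h2, one_mul]
    _ = _ := by ring

section Schwartz

variable {E F : Type*} [NormedAddCommGroup E] [NormedSpace ℝ E]
  [NormedAddCommGroup F] [NormedSpace ℝ F]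

lemma schwartz_lipschitz (f : SchwartzMap E F) :
    ∃ C : ℝ, 0 ≤ C ∧ ∀ p q, ‖f q - f p‖ ≤ C * ‖q - p‖ := by
  refine ⟨SchwartzMap.seminorm ℝ 0 1 f, apply_nonneg _ _, fun p q => ?_⟩
  refine convex_univ.norm_image_sub_le_of_norm_fderiv_le (𝕜 := ℝ)
    (fun y _ => f.differentiableAt) (fun y _ => ?_) (Set.mem_univ p) (Set.mem_univ q)
  have := f.norm_iteratedFDeriv_le_seminorm ℝ 1 y
  rwa [norm_iteratedFDeriv_one] at this

/-- First-order Taylor expansion with quadratic remainder, uniform in the base point. -/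
lemma schwartz_taylor (f : SchwartzMap E F) :
    ∃ C : ℝ, 0 ≤ C ∧ ∀ p h, ‖f (p + h) - f p - fderiv ℝ f p h‖ ≤ C * ‖h‖ ^ 2 := by
  obtain ⟨C, hC, hL⟩ := schwartz_lipschitz (SchwartzMap.fderivCLM ℝ E F f)
  refine ⟨C, hC, fun p h => ?_⟩
  have key := (convex_closedBall p ‖h‖).norm_image_sub_le_of_norm_fderiv_le' (𝕜 := ℝ)
    (f := f) (φ := fderiv ℝ f p) (C := C * ‖h‖) (x := p) (y := p + h)
    (fun y _ => f.differentiableAt) (fun y hy => ?_) (by simp) (by simp)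
  · simpa [pow_two, mul_assoc] using key
  · refine (hL p y).trans ?_
    gcongr
    simpa [dist_eq_norm] using hy

lemma schwartz_second_difference (f : SchwartzMap E F) :
    ∃ C : ℝ, 0 ≤ C ∧ ∀ p h, ‖f (p - h) + f (p + h) - (2 : ℝ) • f p‖ ≤ C * ‖h‖ ^ 2 := by
  obtain ⟨C, hC, hT⟩ := schwartz_taylor f
  refine ⟨2 * C, by positivity, fun p h => ?_⟩
  have h1 := hT p h
  have h2 := hT p (-h)
  rw [norm_neg, map_neg, ← sub_eq_add_neg] at h2
  calc _ = ‖(f (p + h) - f p - fderiv ℝ f p h) + (f (p - h) - f p - -fderiv ℝ f p h)‖ := by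
        congr 1; rw [two_smul]; abel
    _ ≤ _ := (norm_add_le _ _).trans (by linarith)

end Schwartz

lemma integrable_gaussKernel_mul {n : ℕ} {τ : ℝ} (hτ : 0 < τ) {u : EuclideanSpace ℝ (Fin n) → ℝ}
    (hu : Continuous u) {M : ℝ} (hM : ∀ z, ‖u z‖ ≤ M) :
    Integrable fun z => gaussKernel z τ * u z :=
  (integrable_gaussKernel hτ).mul_bdd hu.aestronglyMeasurable (Filter.Eventually.of_forall hM)

lemma evolutiveSemigroup_eq_sub {n : ℕ} (f : SchwartzMap (EuclideanSpace ℝ (Fin n) × ℝ) ℝ)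
    (x : EuclideanSpace ℝ (Fin n)) (t τ : ℝ) :
    evolutiveSemigroup f x t τ = ∫ z, gaussKernel z τ * f (x - z, t - τ) := by
  rw [← integral_sub_left_eq_self _ volume x]
  simp [evolutiveSemigroup]

lemma evolutiveSemigroup_eq_add {n : ℕ} (f : SchwartzMap (EuclideanSpace ℝ (Fin n) × ℝ) ℝ)
    (x : EuclideanSpace ℝ (Fin n)) (t τ : ℝ) :
    evolutiveSemigroup f x t τ = ∫ z, gaussKernel z τ * f (x + z, t - τ) := by
  rw [evolutiveSemigroup_eq_sub, ← integral_neg_eq_self]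
  simp [gaussKernel_neg]

lemma measurable_evolutiveSemigroup {n : ℕ} (f : SchwartzMap (EuclideanSpace ℝ (Fin n) × ℝ) ℝ)
    (x : EuclideanSpace ℝ (Fin n)) (t : ℝ) :
    Measurable fun τ => evolutiveSemigroup f x t τ := by
  have h : Measurable fun p : ℝ × EuclideanSpace ℝ (Fin n) =>
      gaussKernel (x - p.2) p.1 * f (p.2, t - p.1) := by
    refine Measurable.mul ?_ ?_
    · exact measurable_gaussKernel.comp
        (g := fun p : EuclideanSpace ℝ (Fin n) × ℝ => gaussKernel p.1 p.2)
        (f := fun p : ℝ × EuclideanSpace ℝ (Fin n) => (x - p.2, p.1)) (by fun_prop)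
    · exact (f.continuous.comp (f := fun p : ℝ × EuclideanSpace ℝ (Fin n) => (p.2, t - p.1))
        (by fun_prop)).measurable
  exact h.stronglyMeasurable.integral_prod_right'.measurable

lemma evolutiveSemigroup_sub_bounded {n : ℕ} (f : SchwartzMap (EuclideanSpace ℝ (Fin n) × ℝ) ℝ)
    (x : EuclideanSpace ℝ (Fin n)) (t : ℝ) :
    ∃ C : ℝ, ∀ τ, 0 < τ → ‖evolutiveSemigroup f x t τ - f (x, t)‖ ≤ C := by
  set M := SchwartzMap.seminorm ℝ 0 0 f
  have hM : ∀ p, ‖f p‖ ≤ M := f.norm_le_seminorm ℝ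
  refine ⟨M + M, fun τ hτ => (norm_sub_le _ _).trans (add_le_add ?_ (hM _))⟩
  rw [evolutiveSemigroup_eq_sub]
  calc _ ≤ ∫ z : EuclideanSpace ℝ (Fin n), gaussKernel z τ * M := by
        refine norm_integral_le_of_norm_le ((integrable_gaussKernel hτ).mul_const M)
          (Filter.Eventually.of_forall fun z => ?_)
        rw [norm_mul, Real.norm_of_nonneg (gaussKernel_nonneg z hτ)]
        exact mul_le_mul_of_nonneg_left (hM _) (gaussKernel_nonneg z hτ)
    _ = M := by rw [integral_mul_const, integral_gaussKernel hτ, one_mul]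

/-- The semigroup approaches the identity at rate `O(τ)`, by symmetrization in space. -/
lemma evolutiveSemigroup_sub_le {n : ℕ} (f : SchwartzMap (EuclideanSpace ℝ (Fin n) × ℝ) ℝ)
    (x : EuclideanSpace ℝ (Fin n)) (t : ℝ) :
    ∃ C : ℝ, ∀ τ, 0 < τ → ‖evolutiveSemigroup f x t τ - f (x, t)‖ ≤ C * τ := by
  obtain ⟨L, hL, hLip⟩ := schwartz_lipschitz f
  obtain ⟨C, hC, hD⟩ := schwartz_second_difference f
  have hM : ∀ p, ‖f p‖ ≤ SchwartzMap.seminorm ℝ 0 0 f := f.norm_le_seminorm ℝ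
  refine ⟨(C * (8 * 2 ^ ((n : ℝ) / 2)) + 2 * L) / 2, fun τ hτ => ?_⟩
  have h1 : Integrable fun z : EuclideanSpace ℝ (Fin n) => gaussKernel z τ * f (x - z, t - τ) :=
    integrable_gaussKernel_mul hτ (f.continuous.comp (by fun_prop)) fun z => hM _
  have h2 : Integrable fun z : EuclideanSpace ℝ (Fin n) => gaussKernel z τ * f (x + z, t - τ) :=
    integrable_gaussKernel_mul hτ (f.continuous.comp (by fun_prop)) fun z => hM _
  have h3 : Integrable fun z : EuclideanSpace ℝ (Fin n) => gaussKernel z τ * (2 * f (x, t)) :=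
    (integrable_gaussKernel hτ).mul_const _
  have hsym : 2 * (evolutiveSemigroup f x t τ - f (x, t)) = ∫ z : EuclideanSpace ℝ (Fin n),
      (gaussKernel z τ * f (x - z, t - τ) + gaussKernel z τ * f (x + z, t - τ)
        - gaussKernel z τ * (2 * f (x, t))) := by
    rw [integral_sub (by exact h1.add h2) h3, integral_add h1 h2, ← evolutiveSemigroup_eq_sub,
      ← evolutiveSemigroup_eq_add, integral_mul_const, integral_gaussKernel hτ]
    ring
  have hτ2 : 0 < 2 * τ := by positivity
  have hbound : ‖2 * (evolutiveSemigroup f x t τ - f (x, t))‖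
      ≤ ∫ z : EuclideanSpace ℝ (Fin n), (C * (8 * 2 ^ ((n : ℝ) / 2) * τ) * gaussKernel z (2 * τ)
        + 2 * L * τ * gaussKernel z τ) := by
    rw [hsym]
    refine norm_integral_le_of_norm_le (((integrable_gaussKernel hτ2).const_mul _).add
      ((integrable_gaussKernel hτ).const_mul _)) (Filter.Eventually.of_forall fun z => ?_)
    have hG := gaussKernel_nonneg z hτ
    have hspace := hD (x, t - τ) (z, 0)
    have htime := hLip (x, t) (x, t - τ)
    simp only [Prod.mk_sub_mk, Prod.mk_add_mk, sub_zero, add_zero, sub_self, smul_eq_mul,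
      Prod.norm_mk, norm_zero, norm_nonneg, sup_of_le_left, sup_of_le_right] at hspace htime
    rw [show t - τ - t = -τ by ring, norm_neg, Real.norm_of_nonneg hτ.le] at htime
    have hdiff : ‖f (x - z, t - τ) + f (x + z, t - τ) - 2 * f (x, t)‖
        ≤ C * ‖z‖ ^ 2 + 2 * L * τ := by
      rw [Real.norm_eq_abs, abs_le] at *
      constructor <;> linarith [hspace.1, hspace.2, htime.1, htime.2]
    rw [← mul_add, ← mul_sub, norm_mul, Real.norm_of_nonneg hG]
    calc _ ≤ gaussKernel z τ * (C * ‖z‖ ^ 2 + 2 * L * τ) := by gcongr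
      _ = C * (‖z‖ ^ 2 * gaussKernel z τ) + 2 * L * τ * gaussKernel z τ := by ring
      _ ≤ C * (8 * 2 ^ ((n : ℝ) / 2) * τ * gaussKernel z (2 * τ))
          + 2 * L * τ * gaussKernel z τ := by
          gcongr ?_ + _
          exact mul_le_mul_of_nonneg_left (sq_norm_mul_gaussKernel_le z hτ) hC
      _ = _ := by ring
  rw [integral_add ((integrable_gaussKernel hτ2).const_mul _)
    ((integrable_gaussKernel hτ).const_mul _), integral_const_mul, integral_const_mul,
    integral_gaussKernel hτ, integral_gaussKernel hτ2, norm_mul, Real.norm_two] at hbound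
  linarith

/-- for a Schwartz function `f` on `ℝ^{n+1}` and `0 < s < 1`, the function
`τ ↦ τ^{-1-s} (P^H_τ f(x,t) - f(x,t))` is integrable on `(0,∞)` for each fixed `(x,t)`,
so the Balakrishnan formula for `H^s f` is well defined. -/
theorem balakrishnan_integrand_integrable (n : ℕ) (hn : 1 ≤ n) (s : ℝ)
    (hs : s ∈ Set.Ioo (0 : ℝ) 1)
    (f : SchwartzMap (EuclideanSpace ℝ (Fin n) × ℝ) ℝ)
    (x : EuclideanSpace ℝ (Fin n)) (t : ℝ) :
    MeasureTheory.IntegrableOn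
      (fun τ : ℝ => τ ^ (-1 - s) * (evolutiveSemigroup f x t τ - f (x, t)))
      (Set.Ioi 0) := by
  obtain ⟨hs0, hs1⟩ := hs
  obtain ⟨A, hA⟩ := evolutiveSemigroup_sub_le f x t
  obtain ⟨B, hB⟩ := evolutiveSemigroup_sub_bounded f x t
  have hmeas : Measurable fun τ : ℝ => τ ^ (-1 - s) * (evolutiveSemigroup f x t τ - f (x, t)) :=
    (measurable_id.pow_const _).mul ((measurable_evolutiveSemigroup f x t).sub_const _)
  rw [← Set.Ioc_union_Ioi_eq_Ioi (zero_le_one' ℝ)]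
  refine IntegrableOn.union ?_ ?_
  · have hint : IntegrableOn (fun τ : ℝ => τ ^ (-s) * A) (Set.Ioc 0 1) :=
      ((intervalIntegrable_iff_integrableOn_Ioc_of_le zero_le_one).1
        (intervalIntegral.intervalIntegrable_rpow' (by linarith))).mul_const A
    refine Integrable.mono' hint hmeas.aestronglyMeasurable
      ((ae_restrict_iff' measurableSet_Ioc).2 (Filter.Eventually.of_forall fun τ hτ => ?_))
    have hpos : 0 < τ := hτ.1
    rw [norm_mul, Real.norm_of_nonneg (Real.rpow_nonneg hpos.le _)]
    calc _ ≤ τ ^ (-1 - s) * (A * τ) :=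
          mul_le_mul_of_nonneg_left (hA τ hpos) (Real.rpow_nonneg hpos.le _)
      _ = (τ ^ (-1 - s) * τ ^ (1 : ℝ)) * A := by rw [Real.rpow_one]; ring
      _ = τ ^ (-s) * A := by rw [← Real.rpow_add hpos]; ring_nf
  · have hint : IntegrableOn (fun τ : ℝ => τ ^ (-1 - s) * B) (Set.Ioi 1) :=
      (integrableOn_Ioi_rpow_of_lt (by linarith) one_pos).mul_const B
    refine Integrable.mono' hint hmeas.aestronglyMeasurable
      ((ae_restrict_iff' measurableSet_Ioi).2 (Filter.Eventually.of_forall fun τ hτ => ?_))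
    have hpos : 0 < τ := one_pos.trans hτ
    rw [norm_mul, Real.norm_of_nonneg (Real.rpow_nonneg hpos.le _)]
    exact mul_le_mul_of_nonneg_left (hB τ hpos) (Real.rpow_nonneg hpos.le _)
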